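/- Let f : ℝ → ℂ be 2π-periodic of class C² and let ρ be a filter function. For a discrete function φ define G_h^p(φ)_i = ((f(α_·)φ)^p)_i − f(α_i)(φ^p)_i. Then there exists a constant c > 0, depending only on f and ρ and not on N or φ, such that for every even integer N ≥ 2, every discrete function φ, and every k ∈ {0, 1}: ‖D_h^k(G_h^p(φ))‖_{l²} ≤ c ‖φ‖_{l²} and ‖G_h^p(S_h^k φ)‖_{l²} ≤ c ‖φ‖_{l²}. -/

import Mathlib

open scoped BigOperators
open Finset

noncomputable section

/-- Grid spacing `h = 2π/N`. -/
def hgrid (N : ℤ) : ℝ := 2 * Real.pi / N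

/-- Grid points `α_j = j h`. -/
def gridPt (N : ℤ) (j : ℤ) : ℝ := j * hgrid N

/-- Index set `{-N/2+1, …, N/2}`. -/
def idxs (N : ℤ) : Finset ℤ := Finset.Icc (-(N / 2) + 1) (N / 2)

/-- Discrete Fourier coefficient `f̂_k`. -/
def dft (N : ℤ) (f : ℤ → ℂ) (k : ℤ) : ℂ :=
  (N : ℂ)⁻¹ * ∑ j ∈ idxs N, f j * Complex.exp (-(Complex.I * (k : ℂ) * (gridPt N j : ℂ)))

/-- Reconstruction of a discrete function from Fourier coefficients. -/
def idft (N : ℤ) (c : ℤ → ℂ) (j : ℤ) : ℂ :=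
  ∑ k ∈ idxs N, c k * Complex.exp (Complex.I * (k : ℂ) * (gridPt N j : ℂ))

/-- The pseudo-spectral derivative `S_h`. -/
def Sh (N : ℤ) (f : ℤ → ℂ) : ℤ → ℂ :=
  idft N fun k => if k = N / 2 then 0 else Complex.I * (k : ℂ) * dft N f k

/-- The pseudo-spectral antiderivative `S_h⁻¹`. -/
def Shinv (N : ℤ) (f : ℤ → ℂ) : ℤ → ℂ :=
  idft N fun k => if k = 0 then 0 else dft N f k / (Complex.I * (k : ℂ))

/-- The filtered discrete function `f^p`. -/
def filterP (N : ℤ) (ρ : ℝ → ℝ) (f : ℤ → ℂ) : ℤ → ℂ :=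
  idft N fun k => (ρ (gridPt N k) : ℂ) * dft N f k

/-- The filtered derivative `D_h`. -/
def Dh (N : ℤ) (ρ : ℝ → ℝ) (f : ℤ → ℂ) : ℤ → ℂ :=
  idft N fun k => Complex.I * (k : ℂ) * (ρ (gridPt N k) : ℂ) * dft N f k

/-- Discrete `l²` norm. -/
def l2norm (N : ℤ) (f : ℤ → ℂ) : ℝ :=
  Real.sqrt (hgrid N * ∑ j ∈ idxs N, ‖f j‖ ^ 2)

/-- Discrete Hilbert transform `H_h`. -/
def Hh (N : ℤ) (f : ℤ → ℂ) (i : ℤ) : ℂ :=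
  ((hgrid N / Real.pi : ℝ) : ℂ) *
    ∑ j ∈ (idxs N).filter (fun j => Odd (j - i)),
      f j * (Real.cot ((gridPt N i - gridPt N j) / 2) : ℂ)

/-- Discrete inner product `(f,g)_h`. -/
def dip (N : ℤ) (f g : ℤ → ℂ) : ℂ :=
  (hgrid N : ℂ) * ∑ j ∈ idxs N, (starRingEnd ℂ) (f j) * g j

/-- Discrete mean `⟨f⟩_h`. -/
def dmean (N : ℤ) (f : ℤ → ℂ) : ℂ :=
  (N : ℂ)⁻¹ * ∑ j ∈ idxs N, f j

/-- The discrete function of samples of a periodic function. -/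
def samples (N : ℤ) (f : ℝ → ℂ) : ℤ → ℂ := fun j => f (gridPt N j)

/-- Fourier coefficient of a `2π`-periodic function. -/
def fourierCoeffP (f : ℝ → ℂ) (k : ℤ) : ℂ :=
  ((2 * Real.pi)⁻¹ : ℝ) * ∫ α in (-Real.pi)..Real.pi, f α * Complex.exp (-(Complex.I * (k : ℂ) * (α : ℂ)))

/-- Sobolev norm `‖f‖_s`. -/
def sobolevNorm (s : ℕ) (f : ℝ → ℂ) : ℝ :=
  Real.sqrt (∑' k : ℤ, (1 + (k : ℝ) ^ 2) ^ s * ‖fourierCoeffP f k‖ ^ 2)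

/-- A filter (cutoff) function for numerical filtering. -/
structure IsFilter (ρ : ℝ → ℝ) : Prop where
  even : ∀ x, ρ (-x) = ρ x
  nonneg : ∀ x, 0 ≤ ρ x
  smooth : ∃ r : ℕ, 2 < r ∧ ContDiff ℝ r ρ
  zero_at_pi : ρ Real.pi = 0
  zero_at_neg_pi : ρ (-Real.pi) = 0
  deriv_zero_at_pi : deriv ρ Real.pi = 0
  deriv_zero_at_neg_pi : deriv ρ (-Real.pi) = 0
  one_near_zero : ∃ μ : ℝ, 0 < μ ∧ μ < 1 ∧ ∀ x : ℝ, |x| ≤ μ * Real.pi → ρ x = 1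

/-- The commutator `G_h^p(φ)` of the filtering operator with multiplication by the
samples of a smooth function `f`. -/
def Ghp (N : ℤ) (ρ : ℝ → ℝ) (f : ℝ → ℂ) (φ : ℤ → ℂ) (i : ℤ) : ℂ :=
  filterP N ρ (fun j => f (gridPt N j) * φ j) i - f (gridPt N i) * filterP N ρ φ i

/-!
On the grid `f` is a trigonometric polynomial `∑ a_d e^{idα}` with `|d| ≤ N/2`. Multiplication by
`e^{idα}` shifts frequencies by `d`, so the commutator of the filter with it is, up to a factor of
modulus one, the Fourier multiplier with symbol `ρ((k+d)h) - ρ(kh)`. Since `ρ(-π) = ρ(π)`, the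
`2π`-periodic extension of `ρ` from `(-π, π]` is Lipschitz, so this symbol is `O(|d| h)` even when
`k + d` wraps around modulo `N`. Hence the commutator has norm `O(h ∑ |d| |a_d|)`, and the factor
`h` absorbs one derivative, of norm `O(1/h)`.

The first moment `∑ |d| |a_d|` is bounded independently of `N`: the second differences of `f` on
the grid are `O(h²)`, so Parseval bounds `∑ d⁴ |a_d|²`, and Cauchy–Schwarz applies.
-/

section PeriodicFunctions

open Function Set
open scoped NNReal fwdDiff

lemma periodic_comp_toIocMod {α β : Type*} [AddCommGroup α] [LinearOrder α] [IsOrderedAddMonoid α]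
    [Archimedean α] {g : α → β} {p : α} (hg : Periodic g p) (hp : 0 < p) (a : α) :
    (fun x => g (toIocMod hp a x)) = g :=
  funext fun x => by rw [← self_sub_toIocDiv_zsmul, hg.sub_zsmul_eq]

lemma sum_Ioc_eq_sum_Ioc_of_periodic {α β : Type*} [AddCommGroup α] [LinearOrder α]
    [IsOrderedAddMonoid α] [Archimedean α] [LocallyFiniteOrder α] [AddCommMonoid β] {g : α → β}
    {p : α} (hg : Periodic g p) (hp : 0 < p) (a b : α) :
    ∑ x ∈ Finset.Ioc a (a + p), g x = ∑ x ∈ Finset.Ioc b (b + p), g x := by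
  have toIocMod_mem (c x : α) : toIocMod hp c x ∈ Finset.Ioc c (c + p) :=
    Finset.mem_Ioc.2 (toIocMod_mem_Ioc hp c x)
  have toIocMod_toIocMod_of_mem (c d x : α) (hx : x ∈ Finset.Ioc c (c + p)) :
      toIocMod hp c (toIocMod hp d x) = x := by
    rw [toIocMod_toIocMod, (toIocMod_eq_self hp).2 (Finset.mem_Ioc.1 hx)]
  exact Finset.sum_nbij' (toIocMod hp b) (toIocMod hp a) (fun x _ => toIocMod_mem b x)
    (fun x _ => toIocMod_mem a x) (toIocMod_toIocMod_of_mem a b) (toIocMod_toIocMod_of_mem b a)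
    fun x _ => (congrFun (periodic_comp_toIocMod hg hp b) x).symm

lemma lipschitzWith_comp_toIocMod {E : Type*} [PseudoMetricSpace E] {g : ℝ → E} {K : ℝ≥0}
    {a p : ℝ} (hp : 0 < p) (hg : LipschitzOnWith K g (Icc a (a + p))) (hend : g a = g (a + p)) :
    LipschitzWith K fun x => g (toIocMod hp a x) := by
  set r := toIocMod hp a
  set n := toIocDiv hp a
  have hmem (x : ℝ) : r x ∈ Icc a (a + p) := Ioc_subset_Icc_self (toIocMod_mem_Ioc hp a x)
  have hx_eq (x : ℝ) : r x + n x * p = x := by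
    simpa only [zsmul_eq_mul] using toIocMod_add_toIocDiv_zsmul hp a x
  suffices hle : ∀ x y, x ≤ y → dist (g (r x)) (g (r y)) ≤ K * (y - x) by
    refine LipschitzWith.of_dist_le_mul fun x y => ?_
    rcases le_total x y with hxy | hxy
    · rw [dist_comm x y, Real.dist_eq, abs_of_nonneg (sub_nonneg.2 hxy)]
      exact hle x y hxy
    · rw [dist_comm (g (r x)), Real.dist_eq, abs_of_nonneg (sub_nonneg.2 hxy)]
      exact hle y x hxy
  intro x y hxy
  rcases eq_or_ne (n x) (n y) with hn | hn
  · have hsub : r y - r x = y - x := by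
      have hx := hx_eq x
      rw [hn] at hx
      linarith [hx_eq y]
    refine (hg.dist_le_mul _ (hmem x) _ (hmem y)).trans_eq ?_
    rw [dist_comm, Real.dist_eq, hsub, abs_of_nonneg (sub_nonneg.2 hxy)]
  · -- The path from `x` to `y` passes through the endpoints of their cells, where `g ∘ r` agrees.
    have hlt : n x + 1 ≤ n y := by
      by_contra! h
      have : (n y : ℝ) + 1 ≤ n x := by exact_mod_cast (by lia : n y + 1 ≤ n x)
      nlinarith [hx_eq x, hx_eq y, (toIocMod_mem_Ioc hp a x).1, (toIocMod_mem_Ioc hp a y).2]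
    have hlt' : (n x : ℝ) + 1 ≤ n y := by exact_mod_cast hlt
    calc dist (g (r x)) (g (r y)) ≤ dist (g (r x)) (g (a + p)) + dist (g a) (g (r y)) := by
          rw [hend]; exact dist_triangle _ _ _
      _ ≤ K * dist (r x) (a + p) + K * dist a (r y) := by
          have hap : a ≤ a + p := by linarith
          exact add_le_add (hg.dist_le_mul _ (hmem x) _ (right_mem_Icc.2 hap))
            (hg.dist_le_mul _ (left_mem_Icc.2 hap) _ (hmem y))
      _ = K * ((a + p - r x) + (r y - a)) := by
          rw [dist_comm, dist_comm a, Real.dist_eq, Real.dist_eq,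
            abs_of_nonneg (sub_nonneg.2 (hmem x).2), abs_of_nonneg (sub_nonneg.2 (hmem y).1)]
          ring
      _ ≤ K * (y - x) := by
          gcongr
          nlinarith [hx_eq x, hx_eq y]

lemma exists_lipschitzWith_of_periodic {E : Type*} [NormedAddCommGroup E] [NormedSpace ℝ E]
    {g : ℝ → E} {p : ℝ} (hp : 0 < p) (hg : ContDiff ℝ 1 g) (hper : Periodic g p) :
    ∃ K, LipschitzWith K g := by
  obtain ⟨K, hK⟩ := hg.contDiffOn.exists_lipschitzOnWith one_ne_zero (convex_Icc 0 (0 + p))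
    isCompact_Icc
  refine ⟨K, ?_⟩
  rw [← periodic_comp_toIocMod hper hp 0]
  exact lipschitzWith_comp_toIocMod hp hK (hper 0).symm

lemma periodic_deriv {E : Type*} [NormedAddCommGroup E] [NormedSpace ℝ E] {g : ℝ → E} {p : ℝ}
    (hg : Periodic g p) : Periodic (deriv g) p := fun x => by
  rw [← deriv_comp_add_const, hg.funext]

lemma norm_fwdDiff_fwdDiff_le {E : Type*} [NormedAddCommGroup E] [NormedSpace ℝ E] {f : ℝ → E}
    {K : ℝ≥0} (hf : Differentiable ℝ f) (hK : LipschitzWith K (deriv f)) (t x : ℝ) :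
    ‖Δ_[t] (Δ_[t] f) x‖ ≤ K * t ^ 2 := by
  have hderiv (y : ℝ) : HasDerivAt (Δ_[t] f) (deriv f (y + t) - deriv f y) y :=
    ((hf (y + t)).hasDerivAt.comp_add_const y t).sub (hf y).hasDerivAt
  have hderiv_le (y : ℝ) : ‖deriv f (y + t) - deriv f y‖ ≤ K * |t| := by
    simpa using hK.norm_sub_le (y + t) y
  calc ‖Δ_[t] f (x + t) - Δ_[t] f x‖ ≤ K * |t| * ‖x + t - x‖ :=
        convex_univ.norm_image_sub_le_of_norm_hasDerivWithin_le
          (fun y _ => (hderiv y).hasDerivWithinAt) (fun y _ => hderiv_le y) (mem_univ x)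
          (mem_univ (x + t))
    _ = K * t ^ 2 := by
        rw [add_sub_cancel_left, Real.norm_eq_abs, mul_assoc, abs_mul_abs_self, sq]

end PeriodicFunctions

section Grid

open Function
open scoped Real fwdDiff

variable {N : ℤ}

lemma hgrid_pos (hN : 0 < N) : 0 < hgrid N :=
  div_pos Real.two_pi_pos (Int.cast_pos.2 hN)

lemma mul_hgrid (hN : N ≠ 0) : N * hgrid N = 2 * π :=
  mul_div_cancel₀ _ (Int.cast_ne_zero.2 hN)

lemma half_mul_hgrid (hN : N ≠ 0) : N / 2 * hgrid N = π := by
  linarith [mul_hgrid hN]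

lemma hgrid_le_pi (hN : 2 ≤ N) : hgrid N ≤ π := by
  have hN' : (2 : ℝ) ≤ N := by exact_mod_cast hN
  rw [← half_mul_hgrid (by lia : N ≠ 0)]
  exact le_mul_of_one_le_left (hgrid_pos (by lia)).le (by linarith)

lemma gridPt_add (i j : ℤ) : gridPt N (i + j) = gridPt N i + gridPt N j := by
  simp only [gridPt, Int.cast_add, add_mul]

lemma gridPt_one : gridPt N 1 = hgrid N := by
  rw [gridPt, Int.cast_one, one_mul]

lemma gridPt_self (hN : N ≠ 0) : gridPt N N = 2 * π :=
  mul_hgrid hN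

lemma mem_idxs_iff (hE : Even N) {k : ℤ} : k ∈ idxs N ↔ -N < 2 * k ∧ 2 * k ≤ N := by
  have := Int.even_iff.1 hE
  rw [idxs, Finset.mem_Icc]
  lia

lemma idxs_eq_Ioc (hE : Even N) : idxs N = Ioc (-(N / 2)) (-(N / 2) + N) := by
  ext k
  have := Int.even_iff.1 hE
  rw [mem_idxs_iff hE, Finset.mem_Ioc]
  lia

lemma card_idxs (hN : 0 ≤ N) (hE : Even N) : ((idxs N).card : ℤ) = N := by
  rw [idxs_eq_Ioc hE, Int.card_Ioc, add_sub_cancel_left, Int.toNat_of_nonneg hN]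

lemma eq_of_dvd_sub_of_mem_idxs (hE : Even N) {k l : ℤ} (hk : k ∈ idxs N) (hl : l ∈ idxs N)
    (h : N ∣ k - l) : k = l := by
  rw [mem_idxs_iff hE] at hk hl
  exact sub_eq_zero.1 (Int.eq_zero_of_abs_lt_dvd h (by rw [abs_lt]; lia))

lemma gridPt_mem_Ioc (hN : 0 < N) (hE : Even N) {k : ℤ} (hk : k ∈ idxs N) :
    gridPt N k ∈ Set.Ioc (-π) π := by
  obtain ⟨hk₁, hk₂⟩ := (mem_idxs_iff hE).1 hk
  have hk₁' : -(N : ℝ) < 2 * k := by exact_mod_cast hk₁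
  have hk₂' : (2 * k : ℝ) ≤ N := by exact_mod_cast hk₂
  have hh := hgrid_pos hN
  have hNh := mul_hgrid hN.ne'
  constructor <;> rw [gridPt] <;> nlinarith

lemma abs_le_of_mem_idxs (hE : Even N) {k : ℤ} (hk : k ∈ idxs N) : |(k : ℝ)| ≤ N / 2 := by
  obtain ⟨hk₁, hk₂⟩ := (mem_idxs_iff hE).1 hk
  have hk₁' : -(N : ℝ) < 2 * k := by exact_mod_cast hk₁
  have hk₂' : (2 * k : ℝ) ≤ N := by exact_mod_cast hk₂
  rw [abs_le]
  constructor <;> linarith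

lemma sum_idxs_add {M : Type*} [AddCommMonoid M] (hN : 0 < N) (hE : Even N) {g : ℤ → M}
    (hg : Periodic g N) (d : ℤ) : ∑ j ∈ idxs N, g (j + d) = ∑ j ∈ idxs N, g j := by
  rw [idxs_eq_Ioc hE, ← Finset.sum_image (f := g) fun i _ j _ h => add_right_cancel h,
    Finset.image_add_right_Ioc, add_right_comm]
  exact sum_Ioc_eq_sum_Ioc_of_periodic hg hN _ _

lemma periodic_samples (hN : N ≠ 0) {f : ℝ → ℂ} (hf : Periodic f (2 * π)) :
    Periodic (samples N f) N := fun j => by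
  rw [samples, gridPt_add, gridPt_self hN, hf]; rfl

lemma fwdDiff_samples (f : ℝ → ℂ) : Δ_[1] (samples N f) = samples N (Δ_[hgrid N] f) := by
  ext j
  simp only [fwdDiff, samples, gridPt_add, gridPt_one]

end Grid

section Modes

open Function
open scoped Real ComplexConjugate

variable {N : ℤ}

/-- The discrete exponential `j ↦ e^{ikα_j}`, the building block of `dft` and `idft`. -/
def mode (N k j : ℤ) : ℂ :=
  Complex.exp (Complex.I * (k : ℂ) * (gridPt N j : ℂ))

lemma mode_comm (k j : ℤ) : mode N k j = mode N j k := by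
  simp only [mode, gridPt]
  congr 1
  push_cast
  ring

lemma mode_zero_left (j : ℤ) : mode N 0 j = 1 := by
  simp [mode]

lemma mode_add_left (k l j : ℤ) : mode N (k + l) j = mode N k j * mode N l j := by
  simp only [mode, ← Complex.exp_add]
  congr 1
  push_cast
  ring

lemma mode_add_right (k i j : ℤ) : mode N k (i + j) = mode N k i * mode N k j := by
  simp only [mode_comm k, mode_add_left]

lemma conj_mode (k j : ℤ) : conj (mode N k j) = mode N (-k) j := by
  simp [mode, ← Complex.exp_conj]

lemma mode_neg_comm (k j : ℤ) : mode N (-k) j = mode N (-j) k := by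
  rw [← conj_mode, mode_comm, conj_mode]

lemma mode_one_right (k : ℤ) : mode N k 1 = Complex.exp (Complex.I * (gridPt N k : ℝ)) := by
  rw [mode_comm, mode, Int.cast_one, mul_one]

lemma norm_mode (k j : ℤ) : ‖mode N k j‖ = 1 := by
  rw [mode, mul_assoc, ← Complex.ofReal_intCast, ← Complex.ofReal_mul,
    Complex.norm_exp_I_mul_ofReal]

lemma mode_one_right_eq_one_iff (hN : N ≠ 0) (k : ℤ) : mode N k 1 = 1 ↔ N ∣ k := by
  have hNc : (N : ℂ) ≠ 0 := Int.cast_ne_zero.2 hN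
  rw [mode_one_right, Complex.exp_eq_one_iff]
  refine exists_congr fun m => ?_
  have : Complex.I * (gridPt N k : ℝ) = (k / N : ℂ) * (2 * π * Complex.I) := by
    simp only [gridPt, hgrid]
    push_cast
    ring
  rw [this, mul_left_inj' Complex.two_pi_I_ne_zero, div_eq_iff hNc, mul_comm N m]
  norm_cast

lemma periodic_mode (hN : N ≠ 0) (k : ℤ) : Periodic (mode N k) N := fun j => by
  have : mode N k N = 1 := by
    rw [mode, gridPt_self hN, Complex.exp_eq_one_iff]
    exact ⟨k, by push_cast; ring⟩
  rw [mode_add_right, this, mul_one]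

lemma mul_abs_le_norm_mode_sub_one (hN : 0 < N) (hE : Even N) {k : ℤ} (hk : k ∈ idxs N) :
    2 * hgrid N / π * |(k : ℝ)| ≤ ‖mode N k 1 - 1‖ := by
  obtain ⟨hlow, hhigh⟩ := gridPt_mem_Ioc hN hE hk
  have hhalf : |gridPt N k / 2| ≤ π / 2 := by
    rw [abs_div, abs_two]
    linarith [abs_le.2 ⟨hlow.le, hhigh⟩]
  have hsin := Real.mul_abs_le_abs_sin hhalf
  rw [mode_one_right, Complex.norm_exp_I_mul_ofReal_sub_one, norm_mul, Real.norm_two,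
    Real.norm_eq_abs]
  calc 2 * hgrid N / π * |(k : ℝ)| = 2 * (2 / π * |gridPt N k / 2|) := by
        rw [gridPt, abs_div, abs_mul, abs_two, abs_of_pos (hgrid_pos hN)]
        ring
    _ ≤ _ := by gcongr

lemma sum_mode (hN : 0 < N) (hE : Even N) (n : ℤ) :
    ∑ j ∈ idxs N, mode N n j = if N ∣ n then (N : ℂ) else 0 := by
  have hshift : mode N n 1 * ∑ j ∈ idxs N, mode N n j = ∑ j ∈ idxs N, mode N n j := by
    conv_rhs => rw [← sum_idxs_add hN hE (periodic_mode hN.ne' n) 1]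
    simp only [mode_add_right, ← Finset.sum_mul, mul_comm]
  split_ifs with hn
  · obtain ⟨m, rfl⟩ := hn
    have hone (j : ℤ) : mode N (N * m) j = 1 := by
      rw [mode_comm, mul_comm, ← smul_eq_mul, (periodic_mode hN.ne' j).zsmul_eq, mode_comm,
        mode_zero_left]
    simp only [hone, Finset.sum_const, nsmul_eq_mul, mul_one]
    exact_mod_cast card_idxs hN.le hE
  · rw [← mode_one_right_eq_one_iff hN.ne'] at hn
    exact (mul_left_eq_self₀.1 hshift).resolve_left hn

lemma sum_mode_sub (hN : 0 < N) (hE : Even N) {k l : ℤ} (hk : k ∈ idxs N) (hl : l ∈ idxs N) :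
    ∑ j ∈ idxs N, mode N (k - l) j = if k = l then (N : ℂ) else 0 := by
  rw [sum_mode hN hE]
  exact if_congr ⟨eq_of_dvd_sub_of_mem_idxs hE hk hl, fun h => by simp [h]⟩ rfl rfl

end Modes

section DiscreteFourierTransform

open Function
open scoped ComplexConjugate fwdDiff

variable {N : ℤ}

lemma idft_apply (c : ℤ → ℂ) (j : ℤ) : idft N c j = ∑ k ∈ idxs N, c k * mode N k j := rfl

lemma dft_apply (f : ℤ → ℂ) (k : ℤ) :
    dft N f k = (N : ℂ)⁻¹ * ∑ j ∈ idxs N, f j * mode N (-k) j := by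
  simp only [dft, mode, Int.cast_neg, mul_neg, neg_mul]

lemma periodic_idft (hN : N ≠ 0) (c : ℤ → ℂ) : Periodic (idft N c) N := fun j => by
  simp only [idft_apply, periodic_mode hN _ j]

lemma periodic_dft (hN : N ≠ 0) (f : ℤ → ℂ) : Periodic (dft N f) N := fun k => by
  have hmode (j : ℤ) : mode N (-(k + N)) j = mode N (-k) j := by
    rw [mode_comm, mode_comm (-k), neg_add', (periodic_mode hN j).sub_eq]
  simp only [dft_apply, hmode]

lemma dft_comp_add (hN : 0 < N) (hE : Even N) {f : ℤ → ℂ} (hf : Periodic f N) (d k : ℤ) :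
    dft N (fun j => f (j + d)) k = mode N k d * dft N f k := by
  rw [dft_apply, dft_apply,
    ← sum_idxs_add hN hE (g := fun j => f j * mode N (-k) j) (hf.mul (periodic_mode hN.ne' (-k))) d,
    mul_left_comm, Finset.mul_sum (a := mode N k d)]
  congr 1
  refine Finset.sum_congr rfl fun j _ => ?_
  have hcancel : mode N k d * mode N (-k) d = 1 := by
    rw [← mode_add_left, add_neg_cancel, mode_zero_left]
  rw [mode_add_right]
  linear_combination (-f (j + d) * mode N (-k) j) * hcancel

lemma dft_mode_mul (d : ℤ) (f : ℤ → ℂ) (k : ℤ) : dft N (mode N d * f) k = dft N f (k - d) := by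
  simp only [dft_apply, Pi.mul_apply]
  congr 1
  refine Finset.sum_congr rfl fun j _ => ?_
  rw [neg_sub, sub_eq_add_neg, mode_add_left]
  ring

lemma dft_fwdDiff (hN : 0 < N) (hE : Even N) {f : ℤ → ℂ} (hf : Periodic f N) (k : ℤ) :
    dft N (Δ_[1] f) k = (mode N k 1 - 1) * dft N f k := by
  rw [sub_mul, ← dft_comp_add hN hE hf, one_mul]
  simp only [dft_apply, fwdDiff, sub_mul, Finset.sum_sub_distrib, mul_sub]

lemma idft_dft_apply (hN : 0 < N) (hE : Even N) (f : ℤ → ℂ) {j : ℤ} (hj : j ∈ idxs N) :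
    idft N (dft N f) j = f j := by
  have hNc : (N : ℂ) ≠ 0 := Int.cast_ne_zero.2 hN.ne'
  calc idft N (dft N f) j
      = (N : ℂ)⁻¹ * ∑ l ∈ idxs N, f l * ∑ k ∈ idxs N, mode N (j - l) k := by
        simp only [idft_apply, dft_apply, Finset.mul_sum, Finset.sum_mul]
        rw [Finset.sum_comm]
        refine Finset.sum_congr rfl fun l _ => Finset.sum_congr rfl fun k _ => ?_
        rw [sub_eq_add_neg, mode_add_left, mode_comm j, mode_neg_comm l]
        ring
    _ = (N : ℂ)⁻¹ * ∑ l ∈ idxs N, f l * if j = l then (N : ℂ) else 0 := by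
        congr 1
        exact Finset.sum_congr rfl fun l hl => by rw [sum_mode_sub hN hE hj hl]
    _ = f j := by
        simp only [mul_ite, mul_zero, Finset.sum_ite_eq, hj, if_true]
        field_simp

lemma idft_dft (hN : 0 < N) (hE : Even N) {f : ℤ → ℂ} (hf : Periodic f N) :
    idft N (dft N f) = f := by
  ext j
  obtain ⟨i, hi, hji⟩ := ((periodic_idft hN.ne' (dft N f)).sub hf).exists_mem_Ioc hN j (-(N / 2))
  have hi' : i ∈ idxs N := by rwa [idxs_eq_Ioc hE, Finset.mem_Ioc]
  exact sub_eq_zero.1 (hji.trans (sub_eq_zero.2 (idft_dft_apply hN hE f hi')))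

lemma sum_norm_sq_idft (hN : 0 < N) (hE : Even N) (c : ℤ → ℂ) :
    ∑ j ∈ idxs N, ‖idft N c j‖ ^ 2 = N * ∑ k ∈ idxs N, ‖c k‖ ^ 2 := by
  apply Complex.ofReal_injective
  push_cast
  have hexpand (j : ℤ) : (‖idft N c j‖ : ℂ) ^ 2
      = ∑ k ∈ idxs N, ∑ l ∈ idxs N, c k * conj (c l) * mode N (k - l) j := by
    rw [← Complex.mul_conj', idft_apply, map_sum, Finset.sum_mul_sum]
    refine Finset.sum_congr rfl fun k _ => Finset.sum_congr rfl fun l _ => ?_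
    rw [map_mul, conj_mode, sub_eq_add_neg, mode_add_left]
    ring
  calc ∑ j ∈ idxs N, (‖idft N c j‖ : ℂ) ^ 2
      = ∑ k ∈ idxs N, ∑ l ∈ idxs N, c k * conj (c l) * ∑ j ∈ idxs N, mode N (k - l) j := by
        simp only [hexpand, Finset.mul_sum]
        rw [Finset.sum_comm]
        exact Finset.sum_congr rfl fun k _ => Finset.sum_comm
    _ = ∑ k ∈ idxs N, ∑ l ∈ idxs N, c k * conj (c l) * if k = l then (N : ℂ) else 0 :=
        Finset.sum_congr rfl fun k hk => Finset.sum_congr rfl fun l hl => by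
          rw [sum_mode_sub hN hE hk hl]
    _ = N * ∑ k ∈ idxs N, (‖c k‖ : ℂ) ^ 2 := by
        rw [Finset.mul_sum]
        refine Finset.sum_congr rfl fun k hk => ?_
        simp only [mul_ite, mul_zero, Finset.sum_ite_eq, hk, if_true]
        rw [Complex.mul_conj', mul_comm]

lemma sum_norm_sq_eq (hN : 0 < N) (hE : Even N) (f : ℤ → ℂ) :
    ∑ j ∈ idxs N, ‖f j‖ ^ 2 = N * ∑ k ∈ idxs N, ‖dft N f k‖ ^ 2 := by
  rw [← sum_norm_sq_idft hN hE]
  exact Finset.sum_congr rfl fun j hj => by rw [idft_dft_apply hN hE f hj]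

lemma sum_norm_sq_dft_le (hN : 0 < N) (hE : Even N) {f : ℤ → ℂ} {B : ℝ}
    (hf : ∀ j ∈ idxs N, ‖f j‖ ≤ B) : ∑ k ∈ idxs N, ‖dft N f k‖ ^ 2 ≤ B ^ 2 := by
  have hNr : (0 : ℝ) < N := Int.cast_pos.2 hN
  have hcard : ((idxs N).card : ℝ) = N := by exact_mod_cast card_idxs hN.le hE
  refine le_of_mul_le_mul_left ?_ hNr
  rw [← sum_norm_sq_eq hN hE, ← hcard, ← nsmul_eq_mul]
  exact Finset.sum_le_card_nsmul _ _ _ fun j hj => pow_le_pow_left₀ (norm_nonneg _) (hf j hj) 2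

end DiscreteFourierTransform

section DiscreteNorm

variable {N : ℤ}

lemma l2norm_nonneg (f : ℤ → ℂ) : 0 ≤ l2norm N f :=
  Real.sqrt_nonneg _

lemma l2norm_eq_sqrt_mul_norm (f : ℤ → ℂ) :
    l2norm N f = √(hgrid N * ‖WithLp.toLp 2 fun j : idxs N => f j‖ ^ 2) := by
  rw [l2norm, EuclideanSpace.norm_sq_eq, ← Finset.sum_coe_sort (idxs N)]

lemma l2norm_sum_le (hN : 0 < N) {ι : Type*} (s : Finset ι) (g : ι → ℤ → ℂ) :
    l2norm N (∑ d ∈ s, g d) ≤ ∑ d ∈ s, l2norm N (g d) := by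
  simp only [l2norm_eq_sqrt_mul_norm, Real.sqrt_mul (hgrid_pos hN).le,
    Real.sqrt_sq (norm_nonneg _), ← Finset.mul_sum]
  have htoLp : WithLp.toLp 2 (fun j : idxs N => (∑ d ∈ s, g d) j)
      = ∑ d ∈ s, WithLp.toLp 2 fun j : idxs N => g d j := by
    rw [← WithLp.toLp_sum]
    congr 1
    ext j
    simp only [Finset.sum_apply]
  rw [htoLp]
  gcongr
  exact norm_sum_le _ _

lemma l2norm_smul (a : ℂ) (f : ℤ → ℂ) : l2norm N (a • f) = ‖a‖ * l2norm N f := by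
  simp only [l2norm, Pi.smul_apply, norm_smul, mul_pow, ← Finset.mul_sum]
  rw [mul_left_comm, Real.sqrt_mul (sq_nonneg _), Real.sqrt_sq (norm_nonneg a)]

lemma l2norm_mode_mul (d : ℤ) (f : ℤ → ℂ) : l2norm N (mode N d * f) = l2norm N f := by
  simp only [l2norm, Pi.mul_apply, norm_mul, norm_mode, one_mul]

end DiscreteNorm

section FourierMultipliers

open Function
open scoped Real

variable {N : ℤ}

/-- The Fourier multiplier with symbol `m`: the operator acting on discrete functions by
`φ̂_k ↦ m k * φ̂_k`. Only the values of `m` on `idxs N` matter. -/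
def fourierMultiplier (N : ℤ) (m : ℤ → ℂ) : (ℤ → ℂ) →ₗ[ℂ] ℤ → ℂ where
  toFun φ := idft N fun k => m k * dft N φ k
  map_add' φ ψ := by
    ext j
    simp only [idft, dft, Pi.add_apply, add_mul, mul_add, Finset.sum_add_distrib]
  map_smul' a φ := by
    ext j
    simp only [idft, dft, Pi.smul_apply, smul_eq_mul, RingHom.id_apply, mul_assoc,
      ← Finset.mul_sum, mul_left_comm _ a]

lemma fourierMultiplier_apply (m φ : ℤ → ℂ) :
    fourierMultiplier N m φ = idft N fun k => m k * dft N φ k := rfl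

lemma fourierMultiplier_congr {m m' : ℤ → ℂ} (h : ∀ k ∈ idxs N, m k = m' k) :
    fourierMultiplier N m = fourierMultiplier N m' := by
  ext φ j
  simp only [fourierMultiplier_apply, idft_apply]
  exact Finset.sum_congr rfl fun k hk => by rw [h k hk]

lemma fourierMultiplier_sub (m m' φ : ℤ → ℂ) :
    fourierMultiplier N (m - m') φ = fourierMultiplier N m φ - fourierMultiplier N m' φ := by
  ext j
  simp only [fourierMultiplier_apply, idft, Pi.sub_apply, sub_mul, Finset.sum_sub_distrib]

lemma l2norm_fourierMultiplier_le (hN : 0 < N) (hE : Even N) {m : ℤ → ℂ} {B : ℝ}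
    (hm : ∀ k ∈ idxs N, ‖m k‖ ≤ B) (φ : ℤ → ℂ) :
    l2norm N (fourierMultiplier N m φ) ≤ B * l2norm N φ := by
  have hB : 0 ≤ B := (norm_nonneg (m 0)).trans (hm 0 (by rw [mem_idxs_iff hE]; lia))
  have _ : (0 : ℝ) < N := Int.cast_pos.2 hN
  have _ := hgrid_pos hN
  have hsymbol : ∑ k ∈ idxs N, ‖m k * dft N φ k‖ ^ 2 ≤ B ^ 2 * ∑ k ∈ idxs N, ‖dft N φ k‖ ^ 2 := by
    rw [Finset.mul_sum]
    gcongr with k hk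
    rw [norm_mul, mul_pow]
    gcongr
    exact hm k hk
  calc l2norm N (fourierMultiplier N m φ)
      = √(hgrid N * (N * ∑ k ∈ idxs N, ‖m k * dft N φ k‖ ^ 2)) := by
        rw [l2norm, fourierMultiplier_apply, sum_norm_sq_idft hN hE]
    _ ≤ √(hgrid N * (N * (B ^ 2 * ∑ k ∈ idxs N, ‖dft N φ k‖ ^ 2))) := by gcongr
    _ = √(B ^ 2 * (hgrid N * ∑ j ∈ idxs N, ‖φ j‖ ^ 2)) := by
        rw [sum_norm_sq_eq hN hE φ]
        congr 1
        ring
    _ = B * l2norm N φ := by rw [Real.sqrt_mul (sq_nonneg B), Real.sqrt_sq hB, l2norm]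

lemma fourierMultiplier_mode_mul (hN : 0 < N) (hE : Even N) {m : ℤ → ℂ} (hm : Periodic m N)
    (d : ℤ) (φ : ℤ → ℂ) :
    fourierMultiplier N m (mode N d * φ)
      = mode N d * fourierMultiplier N (fun k => m (k + d)) φ := by
  ext j
  have hper : Periodic (fun k => m k * dft N φ (k - d) * mode N k j) N := by
    have hdft : Periodic (fun k => dft N φ (k - d)) N := (periodic_dft hN.ne' φ).sub_const d
    have hmode : Periodic (fun k => mode N k j) N := by
      simpa only [mode_comm] using periodic_mode hN.ne' j
    exact (hm.mul hdft).mul hmode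
  simp only [fourierMultiplier_apply, idft_apply, Pi.mul_apply, dft_mode_mul]
  rw [← sum_idxs_add hN hE hper d, Finset.mul_sum]
  refine Finset.sum_congr rfl fun k _ => ?_
  rw [add_sub_cancel_right, mode_add_left]
  ring

lemma idft_eq_sum_smul_mode (a : ℤ → ℂ) : idft N a = ∑ d ∈ idxs N, a d • mode N d := by
  ext j
  simp only [idft_apply, Finset.sum_apply, Pi.smul_apply, smul_eq_mul]

lemma fourierMultiplier_idft_mul_sub (hN : 0 < N) (hE : Even N) {m : ℤ → ℂ} (hm : Periodic m N)
    (a φ : ℤ → ℂ) :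
    fourierMultiplier N m (idft N a * φ) - idft N a * fourierMultiplier N m φ
      = ∑ d ∈ idxs N, a d • (mode N d * fourierMultiplier N ((fun k => m (k + d)) - m) φ) := by
  simp only [idft_eq_sum_smul_mode, Finset.sum_mul, smul_mul_assoc, map_sum, map_smul,
    fourierMultiplier_mode_mul hN hE hm, fourierMultiplier_sub, mul_sub, smul_sub,
    Finset.sum_sub_distrib]

lemma l2norm_fourierMultiplier_idft_mul_sub_le (hN : 0 < N) (hE : Even N) {m : ℤ → ℂ}
    (hm : Periodic m N) {B : ℝ} (hB : ∀ k d : ℤ, ‖m (k + d) - m k‖ ≤ B * |(d : ℝ)|)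
    (a φ : ℤ → ℂ) :
    l2norm N (fourierMultiplier N m (idft N a * φ) - idft N a * fourierMultiplier N m φ)
      ≤ B * (∑ d ∈ idxs N, |(d : ℝ)| * ‖a d‖) * l2norm N φ := by
  rw [fourierMultiplier_idft_mul_sub hN hE hm, Finset.mul_sum, Finset.sum_mul]
  refine (l2norm_sum_le hN _ _).trans (Finset.sum_le_sum fun d _ => ?_)
  rw [l2norm_smul, l2norm_mode_mul]
  calc ‖a d‖ * l2norm N (fourierMultiplier N ((fun k => m (k + d)) - m) φ)
      ≤ ‖a d‖ * (B * |(d : ℝ)| * l2norm N φ) := by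
        gcongr
        exact l2norm_fourierMultiplier_le hN hE (fun k _ => hB k d) φ
    _ = B * (|(d : ℝ)| * ‖a d‖) * l2norm N φ := by ring

lemma l2norm_Sh_le (hN : 0 < N) (hE : Even N) (φ : ℤ → ℂ) :
    l2norm N (Sh N φ) ≤ N / 2 * l2norm N φ := by
  have hSh : Sh N φ
      = fourierMultiplier N (fun k => if k = N / 2 then 0 else Complex.I * k) φ := by
    simp only [Sh, fourierMultiplier_apply, ite_mul, zero_mul]
  rw [hSh]
  refine l2norm_fourierMultiplier_le hN hE (fun k hk => ?_) φ
  have hk' := abs_le_of_mem_idxs hE hk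
  split_ifs
  · rw [norm_zero]
    exact (abs_nonneg _).trans hk'
  · rwa [norm_mul, Complex.norm_I, one_mul, Complex.norm_intCast]

lemma l2norm_Dh_le (hN : 0 < N) (hE : Even N) {ρ : ℝ → ℝ} {R : ℝ}
    (hR : ∀ x ∈ Set.Ioc (-π) π, |ρ x| ≤ R) (φ : ℤ → ℂ) :
    l2norm N (Dh N ρ φ) ≤ N / 2 * R * l2norm N φ := by
  refine l2norm_fourierMultiplier_le (m := fun k => Complex.I * k * ρ (gridPt N k)) hN hE
    (fun k hk => ?_) φ
  rw [norm_mul, norm_mul, Complex.norm_I, one_mul, Complex.norm_intCast, Complex.norm_real]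
  have hk' := abs_le_of_mem_idxs hE hk
  exact mul_le_mul hk' (hR _ (gridPt_mem_Ioc hN hE hk)) (abs_nonneg _) ((abs_nonneg _).trans hk')

end FourierMultipliers

section FilterSymbol

open Function Set
open scoped Real NNReal

variable {N : ℤ} {ρ : ℝ → ℝ}

/-- The `N`-periodic extension of the symbol `k ↦ ρ(kh)` of the filter from `idxs N` to `ℤ`,
obtained by reducing `kh` modulo `2π` to `(-π, π]`. -/
def filterSymbol (N : ℤ) (ρ : ℝ → ℝ) (k : ℤ) : ℂ :=
  ρ (toIocMod Real.two_pi_pos (-π) (gridPt N k))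

lemma periodic_filterSymbol (hN : N ≠ 0) : Periodic (filterSymbol N ρ) N := fun k => by
  rw [filterSymbol, gridPt_add, gridPt_self hN, toIocMod_add_right, filterSymbol]

lemma fourierMultiplier_filterSymbol (hN : 0 < N) (hE : Even N) (φ : ℤ → ℂ) :
    fourierMultiplier N (filterSymbol N ρ) φ = filterP N ρ φ := by
  have hsymbol (k : ℤ) (hk : k ∈ idxs N) : filterSymbol N ρ k = ρ (gridPt N k) := by
    rw [filterSymbol, (toIocMod_eq_self _).2]
    simpa only [neg_add_eq_sub, two_mul, add_sub_cancel_right] using gridPt_mem_Ioc hN hE hk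
  rw [fourierMultiplier_congr hsymbol]
  rfl

lemma norm_filterSymbol_add_sub_le (hN : 0 < N) {L : ℝ≥0} (hρ : LipschitzOnWith L ρ (Icc (-π) π))
    (hend : ρ (-π) = ρ π) (k d : ℤ) :
    ‖filterSymbol N ρ (k + d) - filterSymbol N ρ k‖ ≤ L * hgrid N * |(d : ℝ)| := by
  have hπ : -π + 2 * π = π := by ring
  have hlip := lipschitzWith_comp_toIocMod (a := -π) Real.two_pi_pos (by rwa [hπ]) (by rwa [hπ])
  rw [filterSymbol, filterSymbol, ← Complex.ofReal_sub, Complex.norm_real]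
  refine (hlip.norm_sub_le _ _).trans_eq ?_
  rw [gridPt_add, add_sub_cancel_left, gridPt, Real.norm_eq_abs, abs_mul,
    abs_of_pos (hgrid_pos hN)]
  ring

lemma l2norm_Ghp_le (hN : 0 < N) (hE : Even N) {L : ℝ≥0} (hρ : LipschitzOnWith L ρ (Icc (-π) π))
    (hend : ρ (-π) = ρ π) {f : ℝ → ℂ} (hf : Periodic f (2 * π)) (φ : ℤ → ℂ) :
    l2norm N (Ghp N ρ f φ)
      ≤ L * hgrid N * (∑ d ∈ idxs N, |(d : ℝ)| * ‖dft N (samples N f) d‖) * l2norm N φ := by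
  have hGhp : Ghp N ρ f φ = fourierMultiplier N (filterSymbol N ρ) (samples N f * φ)
      - samples N f * fourierMultiplier N (filterSymbol N ρ) φ := by
    simp only [fourierMultiplier_filterSymbol hN hE]
    rfl
  have hsamples := idft_dft hN hE (periodic_samples hN.ne' hf)
  rw [hGhp]
  nth_rw 1 2 [← hsamples]
  exact l2norm_fourierMultiplier_idft_mul_sub_le hN hE (periodic_filterSymbol hN.ne')
    (norm_filterSymbol_add_sub_le hN hρ hend) _ φ

end FilterSymbol

section FirstMoment

open Function
open scoped Real fwdDiff

variable {N : ℤ}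

lemma sq_mul_norm_dft_le (hN : 0 < N) (hE : Even N) {F : ℤ → ℂ} (hF : Periodic F N) {k : ℤ}
    (hk : k ∈ idxs N) :
    (k : ℝ) ^ 2 * ‖dft N F k‖ ≤ (π / (2 * hgrid N)) ^ 2 * ‖dft N (Δ_[1] (Δ_[1] F)) k‖ := by
  have hh := hgrid_pos hN
  have hΔF : Periodic (Δ_[1] F) N := fun j => by
    rw [fwdDiff, fwdDiff, add_right_comm, hF, hF]
  have hk_le : |(k : ℝ)| ≤ π / (2 * hgrid N) * ‖mode N k 1 - 1‖ := by
    have := mul_abs_le_norm_mode_sub_one hN hE hk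
    rw [div_mul_eq_mul_div, div_le_iff₀ Real.pi_pos] at this
    rw [div_mul_eq_mul_div, le_div_iff₀ (by positivity)]
    linarith
  rw [dft_fwdDiff hN hE hΔF, dft_fwdDiff hN hE hF, norm_mul, norm_mul, ← sq_abs (k : ℝ)]
  calc |(k : ℝ)| ^ 2 * ‖dft N F k‖
      ≤ (π / (2 * hgrid N) * ‖mode N k 1 - 1‖) ^ 2 * ‖dft N F k‖ := by gcongr
    _ = _ := by ring

lemma sum_sq_mul_norm_dft_samples_sq_le (hN : 0 < N) (hE : Even N) {f : ℝ → ℂ}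
    (hf : Periodic f (2 * π)) {K : ℝ}
    (hK : ∀ x, ‖Δ_[hgrid N] (Δ_[hgrid N] f) x‖ ≤ K * hgrid N ^ 2) :
    ∑ k ∈ idxs N, ((k : ℝ) ^ 2 * ‖dft N (samples N f) k‖) ^ 2 ≤ (π ^ 2 / 4 * K) ^ 2 := by
  have hh := hgrid_pos hN
  set c := (π / (2 * hgrid N)) ^ 2
  calc ∑ k ∈ idxs N, ((k : ℝ) ^ 2 * ‖dft N (samples N f) k‖) ^ 2
      ≤ ∑ k ∈ idxs N, (c * ‖dft N (samples N (Δ_[hgrid N] (Δ_[hgrid N] f))) k‖) ^ 2 := by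
        refine Finset.sum_le_sum fun k hk => pow_le_pow_left₀ (by positivity) ?_ 2
        simpa only [fwdDiff_samples] using
          sq_mul_norm_dft_le hN hE (periodic_samples hN.ne' hf) hk
    _ ≤ c ^ 2 * (K * hgrid N ^ 2) ^ 2 := by
        simp only [mul_pow c, ← Finset.mul_sum]
        gcongr
        exact sum_norm_sq_dft_le hN hE fun j _ => hK _
    _ = (π ^ 2 / 4 * K) ^ 2 := by
        simp only [c]
        field_simp
        ring

lemma sum_abs_mul_norm_dft_samples_le (hN : 0 < N) (hE : Even N) {f : ℝ → ℂ}
    (hf : Periodic f (2 * π)) {K : ℝ}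
    (hK : ∀ x, ‖Δ_[hgrid N] (Δ_[hgrid N] f) x‖ ≤ K * hgrid N ^ 2) :
    ∑ d ∈ idxs N, |(d : ℝ)| * ‖dft N (samples N f) d‖
      ≤ √(∑' d : ℤ, 1 / (d : ℝ) ^ 2) * (π ^ 2 / 4 * K) := by
  have hK0 : 0 ≤ K := by
    have := (norm_nonneg _).trans (hK 0)
    exact nonneg_of_mul_nonneg_left this (pow_pos (hgrid_pos hN) 2)
  -- At `d = 0` both sides vanish, since `0⁻¹ = 0`.
  have hsplit (d : ℤ) : |(d : ℝ)| * ‖dft N (samples N f) d‖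
      = |(d : ℝ)|⁻¹ * ((d : ℝ) ^ 2 * ‖dft N (samples N f) d‖) := by
    rw [← sq_abs, ← mul_assoc, sq, ← mul_assoc, inv_mul_mul_self]
  calc ∑ d ∈ idxs N, |(d : ℝ)| * ‖dft N (samples N f) d‖
      ≤ √(∑ d ∈ idxs N, |(d : ℝ)|⁻¹ ^ 2)
          * √(∑ d ∈ idxs N, ((d : ℝ) ^ 2 * ‖dft N (samples N f) d‖) ^ 2) := by
        simp only [hsplit]
        exact Real.sum_mul_le_sqrt_mul_sqrt _ _ _
    _ ≤ √(∑' d : ℤ, 1 / (d : ℝ) ^ 2) * (π ^ 2 / 4 * K) := by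
        gcongr
        · simp only [← one_div, one_div_pow, sq_abs]
          exact (Real.summable_one_div_int_pow.2 one_lt_two).sum_le_tsum _
            fun d _ => by positivity
        · exact Real.sqrt_le_iff.2
            ⟨by positivity, sum_sq_mul_norm_dft_samples_sq_le hN hE hf hK⟩

end FirstMoment

section Commutator

open Function Set
open scoped Real NNReal

lemma exists_l2norm_Ghp_le_mul_hgrid {f : ℝ → ℂ} (hper : Periodic f (2 * π))
    (hf : Differentiable ℝ f) {K : ℝ≥0} (hK : LipschitzWith K (deriv f)) {ρ : ℝ → ℝ} {L : ℝ≥0}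
    (hρ : LipschitzOnWith L ρ (Icc (-π) π)) (hend : ρ (-π) = ρ π) :
    ∃ C, 0 ≤ C ∧ ∀ N, 0 < N → Even N → ∀ φ,
      l2norm N (Ghp N ρ f φ) ≤ C * hgrid N * l2norm N φ := by
  refine ⟨L * (√(∑' d : ℤ, 1 / (d : ℝ) ^ 2) * (π ^ 2 / 4 * K)), by positivity,
    fun N hN hE φ => (l2norm_Ghp_le hN hE hρ hend hper φ).trans ?_⟩
  rw [mul_right_comm (L : ℝ)]
  have _ := hgrid_pos hN
  gcongr
  · exact l2norm_nonneg φ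
  · exact sum_abs_mul_norm_dft_samples_le hN hE hper (norm_fwdDiff_fwdDiff_le hf hK _)

theorem filter_commutator_smoothing_general {f : ℝ → ℂ} (hper : Periodic f (2 * π))
    (hf : Differentiable ℝ f) {K : ℝ≥0} (hK : LipschitzWith K (deriv f)) {ρ : ℝ → ℝ} {L : ℝ≥0}
    (hρ : LipschitzOnWith L ρ (Icc (-π) π)) (hend : ρ (-π) = ρ π) :
    ∃ c : ℝ, 0 < c ∧ ∀ N : ℤ, 2 ≤ N → Even N → ∀ φ : ℤ → ℂ, ∀ k : ℕ, k ≤ 1 →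
      l2norm N ((Dh N ρ)^[k] (Ghp N ρ f φ)) ≤ c * l2norm N φ ∧
      l2norm N (Ghp N ρ f ((Sh N)^[k] φ)) ≤ c * l2norm N φ := by
  obtain ⟨C, hC, hG⟩ := exists_l2norm_Ghp_le_mul_hgrid hper hf hK hρ hend
  obtain ⟨R, hR⟩ := isCompact_Icc.exists_bound_of_continuousOn hρ.continuousOn
  have hR0 : 0 ≤ R := (norm_nonneg _).trans (hR π (right_mem_Icc.2 (by linarith [Real.pi_pos])))
  refine ⟨π * C * (1 + R) + 1, by positivity, fun N hN2 hE φ k hk => ?_⟩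
  have hN : 0 < N := by lia
  have hh := hgrid_pos hN
  have hφ := l2norm_nonneg (N := N) φ
  have hG_le : l2norm N (Ghp N ρ f φ) ≤ π * C * l2norm N φ := by
    refine (hG N hN hE φ).trans ?_
    rw [mul_comm π]
    gcongr
    exact hgrid_le_pi hN2
  have hDG_le : l2norm N (Dh N ρ (Ghp N ρ f φ)) ≤ π * C * R * l2norm N φ := by
    calc l2norm N (Dh N ρ (Ghp N ρ f φ)) ≤ N / 2 * R * (C * hgrid N * l2norm N φ) :=
          (l2norm_Dh_le hN hE (fun x hx => hR x (Ioc_subset_Icc_self hx)) _).trans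
            (by gcongr; exact hG N hN hE φ)
      _ = π * C * R * l2norm N φ := by rw [← half_mul_hgrid hN.ne']; ring
  have hGS_le : l2norm N (Ghp N ρ f (Sh N φ)) ≤ π * C * l2norm N φ := by
    calc l2norm N (Ghp N ρ f (Sh N φ)) ≤ C * hgrid N * (N / 2 * l2norm N φ) :=
          (hG N hN hE _).trans (by gcongr; exact l2norm_Sh_le hN hE φ)
      _ = π * C * l2norm N φ := by rw [← half_mul_hgrid hN.ne']; ring
  have hCφ : 0 ≤ π * C * l2norm N φ := by positivity
  have hCRφ : 0 ≤ π * C * R * l2norm N φ := by positivity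
  interval_cases k <;> simp only [iterate_zero, iterate_one, id] <;> constructor <;> linarith

end Commutator

/-- Lemma 8.5: the commutator of filtering with multiplication by a
smooth function is a first-order smoothing operator `A_{-1}`. -/
theorem filter_commutator_smoothing (f : ℝ → ℂ)
    (hper : Function.Periodic f (2 * Real.pi)) (hf : ContDiff ℝ 2 f)
    (ρ : ℝ → ℝ) (hρ : IsFilter ρ) :
    ∃ c : ℝ, 0 < c ∧ ∀ N : ℤ, 2 ≤ N → Even N → ∀ φ : ℤ → ℂ, ∀ k : ℕ, k ≤ 1 →
      l2norm N ((Dh N ρ)^[k] (Ghp N ρ f φ)) ≤ c * l2norm N φ ∧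
      l2norm N (Ghp N ρ f ((Sh N)^[k] φ)) ≤ c * l2norm N φ := by
  obtain ⟨r, hr, hρr⟩ := hρ.smooth
  obtain ⟨K, hK⟩ := exists_lipschitzWith_of_periodic Real.two_pi_pos (hf.iterate_deriv' 1 1)
    (periodic_deriv hper)
  obtain ⟨L, hL⟩ := hρr.contDiffOn.exists_lipschitzOnWith (by norm_cast; lia)
    (convex_Icc (-Real.pi) Real.pi) isCompact_Icc
  exact filter_commutator_smoothing_general hper (hf.differentiable two_ne_zero) hK hL
    (hρ.zero_at_neg_pi.trans hρ.zero_at_pi.symm)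

end
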